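/- Let v : ℝ³ → ℝ³ be three times continuously differentiable with div v = 0 on ℝ³. Then at every point of the form (z, 0, θ̄) (i.e. with r̄ = 0), the frame components of v satisfy ∂_z∂_θ̄(∂_z v_z) = −∂_z∂_r̄∂_θ̄ v_r̄ + κ'(θ̄)·∂_z v_r̄ + κ(θ̄)·∂_z∂_θ̄ v_r̄ − ∂_z∂_θ̄² v_θ̄. -/

import Mathlib

/-- Partial derivative in the `j`-th coordinate direction on Euclidean `ℝ³`. -/
noncomputable def pdE {F : Type*} [NormedAddCommGroup F] [NormedSpace ℝ F]
    (j : Fin 3) (g : EuclideanSpace ℝ (Fin 3) → F) (x : EuclideanSpace ℝ (Fin 3)) : F :=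
  fderiv ℝ g x (EuclideanSpace.single j 1)

/-- Euclidean divergence `div v = ∂₁v₁ + ∂₂v₂ + ∂₃v₃`. -/
noncomputable def div3 (v : EuclideanSpace ℝ (Fin 3) → EuclideanSpace ℝ (Fin 3))
    (x : EuclideanSpace ℝ (Fin 3)) : ℝ :=
  ∑ i : Fin 3, pdE i (fun y => v y i) x

/-- Curvature `κ(θ̄) = |φ''(θ̄)|` of a unit-speed plane curve. -/
noncomputable def curveKappa (φ : ℝ → EuclideanSpace ℝ (Fin 2)) (θ : ℝ) : ℝ :=
  ‖deriv (deriv φ) θ‖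

/-- Unit normal `N(θ̄) = φ''(θ̄)/|φ''(θ̄)|` of a unit-speed plane curve. -/
noncomputable def curveN (φ : ℝ → EuclideanSpace ℝ (Fin 2)) (θ : ℝ) :
    EuclideanSpace ℝ (Fin 2) :=
  ‖deriv (deriv φ) θ‖⁻¹ • deriv (deriv φ) θ

/-- The factor `f(r̄,θ̄) = 1 − r̄·κ(θ̄)`. -/
noncomputable def fFactor (φ : ℝ → EuclideanSpace ℝ (Fin 2)) (r θ : ℝ) : ℝ :=
  1 - r * curveKappa φ θ

/-- Embedding `ℝ² ∋ v ↦ (v, 0) ∈ ℝ³`. -/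
noncomputable def emb23 (v : EuclideanSpace ℝ (Fin 2)) : EuclideanSpace ℝ (Fin 3) :=
  !₂[v 0, v 1, 0]

/-- The coordinate map `T(z,r̄,θ̄) = (φ(θ̄) + r̄·N(θ̄), z)`. -/
noncomputable def Tmap (φ : ℝ → EuclideanSpace ℝ (Fin 2)) (z r θ : ℝ) :
    EuclideanSpace ℝ (Fin 3) :=
  !₂[(φ θ + r • curveN φ θ) 0, (φ θ + r • curveN φ θ) 1, z]

/-- Frame component `v_z(z,r̄,θ̄) = v(T(z,r̄,θ̄))·(0,0,1)`. -/
noncomputable def vzComp (φ : ℝ → EuclideanSpace ℝ (Fin 2))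
    (v : EuclideanSpace ℝ (Fin 3) → EuclideanSpace ℝ (Fin 3)) (z r θ : ℝ) : ℝ :=
  inner ℝ (v (Tmap φ z r θ)) (EuclideanSpace.single 2 (1:ℝ))

/-- Frame component `v_r̄(z,r̄,θ̄) = v(T(z,r̄,θ̄))·(N(θ̄),0)`. -/
noncomputable def vrComp (φ : ℝ → EuclideanSpace ℝ (Fin 2))
    (v : EuclideanSpace ℝ (Fin 3) → EuclideanSpace ℝ (Fin 3)) (z r θ : ℝ) : ℝ :=
  inner ℝ (v (Tmap φ z r θ)) (emb23 (curveN φ θ))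

/-- Frame component `v_θ̄(z,r̄,θ̄) = v(T(z,r̄,θ̄))·(φ'(θ̄),0)`. -/
noncomputable def vθComp (φ : ℝ → EuclideanSpace ℝ (Fin 2))
    (v : EuclideanSpace ℝ (Fin 3) → EuclideanSpace ℝ (Fin 3)) (z r θ : ℝ) : ℝ :=
  inner ℝ (v (Tmap φ z r θ)) (emb23 (deriv φ θ))

/-- `∂_z` for a function of `(z, r̄, θ̄)`. -/
noncomputable def Dz (g : ℝ → ℝ → ℝ → ℝ) (z r θ : ℝ) : ℝ := deriv (fun s => g s r θ) z

/-- `∂_r̄` for a function of `(z, r̄, θ̄)`. -/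
noncomputable def Dr (g : ℝ → ℝ → ℝ → ℝ) (z r θ : ℝ) : ℝ := deriv (fun s => g z s θ) r

/-- `∂_θ̄` for a function of `(z, r̄, θ̄)`. -/
noncomputable def Dθ (g : ℝ → ℝ → ℝ → ℝ) (z r θ : ℝ) : ℝ := deriv (fun s => g z r s) θ

/-- linear version of `emb23` -/
noncomputable def emb23L : EuclideanSpace ℝ (Fin 2) →L[ℝ] EuclideanSpace ℝ (Fin 3) :=
  LinearMap.toContinuousLinearMap
    { toFun := emb23
      map_add' := by
        intro x y; ext i; fin_cases i <;> simp [emb23]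
      map_smul' := by
        intro c x; ext i; fin_cases i <;> simp [emb23] }

lemma emb23L_apply (x : EuclideanSpace ℝ (Fin 2)) : emb23L x = emb23 x := rfl

lemma Tmap_eq (φ : ℝ → EuclideanSpace ℝ (Fin 2)) (z r θ : ℝ) :
    Tmap φ z r θ = emb23L (φ θ + r • curveN φ θ)
      + z • (EuclideanSpace.single 2 (1:ℝ) : EuclideanSpace ℝ (Fin 3)) := by
  rw [emb23L_apply]
  ext i; fin_cases i <;> simp [emb23, Tmap]

/-- uncurried function -/
def unc (g : ℝ → ℝ → ℝ → ℝ) : ℝ × ℝ × ℝ → ℝ := fun p => g p.1 p.2.1 p.2.2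

/-- regularity over the tube -/
def Creg (δ : ℝ) (n : ℕ) (g : ℝ → ℝ → ℝ → ℝ) : Prop :=
  ∀ p : ℝ × ℝ × ℝ, p.2.2 ∈ Set.Ioo (-δ) δ → ContDiffAt ℝ n (unc g) p

lemma tube_nhds {δ : ℝ} {p : ℝ × ℝ × ℝ} (hp : p.2.2 ∈ Set.Ioo (-δ) δ) :
    ∀ᶠ q : ℝ × ℝ × ℝ in nhds p, q.2.2 ∈ Set.Ioo (-δ) δ := by
  have : Continuous (fun q : ℝ × ℝ × ℝ => q.2.2) := by fun_prop
  exact this.continuousAt.eventually_mem (isOpen_Ioo.mem_nhds hp)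

lemma Creg.diff {δ : ℝ} {n : ℕ} {g : ℝ → ℝ → ℝ → ℝ} (h : Creg δ (n+1) g)
    {p : ℝ × ℝ × ℝ} (hp : p.2.2 ∈ Set.Ioo (-δ) δ) : DifferentiableAt ℝ (unc g) p :=
  (h p hp).differentiableAt (by simp)

lemma Creg.hz {δ : ℝ} {n : ℕ} {g : ℝ → ℝ → ℝ → ℝ} (h : Creg δ (n+1) g)
    (z r : ℝ) {θ : ℝ} (hp : θ ∈ Set.Ioo (-δ) δ) :
    HasDerivAt (fun s => g s r θ) (fderiv ℝ (unc g) (z, r, θ) (1, 0, 0)) z := by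
  have h1 := (h.diff (p := (z, r, θ)) hp).hasFDerivAt
  have h2 : HasDerivAt (fun s : ℝ => (s, r, θ)) ((1:ℝ), (0:ℝ), (0:ℝ)) z :=
    (hasDerivAt_id z).prodMk ((hasDerivAt_const z r).prodMk (hasDerivAt_const z θ))
  exact h1.comp_hasDerivAt z h2

lemma Creg.hr {δ : ℝ} {n : ℕ} {g : ℝ → ℝ → ℝ → ℝ} (h : Creg δ (n+1) g)
    (z r : ℝ) {θ : ℝ} (hp : θ ∈ Set.Ioo (-δ) δ) :
    HasDerivAt (fun s => g z s θ) (fderiv ℝ (unc g) (z, r, θ) (0, 1, 0)) r := by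
  have h1 := (h.diff (p := (z, r, θ)) hp).hasFDerivAt
  have h2 : HasDerivAt (fun s : ℝ => (z, s, θ)) ((0:ℝ), (1:ℝ), (0:ℝ)) r :=
    (hasDerivAt_const r z).prodMk ((hasDerivAt_id r).prodMk (hasDerivAt_const r θ))
  exact h1.comp_hasDerivAt r h2

lemma Creg.ht {δ : ℝ} {n : ℕ} {g : ℝ → ℝ → ℝ → ℝ} (h : Creg δ (n+1) g)
    (z r : ℝ) {θ : ℝ} (hp : θ ∈ Set.Ioo (-δ) δ) :
    HasDerivAt (fun s => g z r s) (fderiv ℝ (unc g) (z, r, θ) (0, 0, 1)) θ := by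
  have h1 := (h.diff (p := (z, r, θ)) hp).hasFDerivAt
  have h2 : HasDerivAt (fun s : ℝ => (z, r, s)) ((0:ℝ), (0:ℝ), (1:ℝ)) θ :=
    (hasDerivAt_const θ z).prodMk ((hasDerivAt_const θ r).prodMk (hasDerivAt_id θ))
  exact h1.comp_hasDerivAt θ h2

lemma Creg.fd {δ : ℝ} {n : ℕ} {g : ℝ → ℝ → ℝ → ℝ} (h : Creg δ (n+1) g)
    (w : ℝ × ℝ × ℝ) {p : ℝ × ℝ × ℝ} (hp : p.2.2 ∈ Set.Ioo (-δ) δ) :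
    ContDiffAt ℝ n (fun q => fderiv ℝ (unc g) q w) p :=
  ((h p hp).fderiv_right (m := n) (by norm_cast)).clm_apply contDiffAt_const

lemma Creg.dr_ev {δ : ℝ} {n : ℕ} {g : ℝ → ℝ → ℝ → ℝ} (h : Creg δ (n+1) g)
    {p : ℝ × ℝ × ℝ} (hp : p.2.2 ∈ Set.Ioo (-δ) δ) :
    unc (Dr g) =ᶠ[nhds p] fun q => fderiv ℝ (unc g) q (0, 1, 0) :=
  (tube_nhds hp).mono fun q hq => (h.hr q.1 q.2.1 hq).deriv

lemma Creg.dt_ev {δ : ℝ} {n : ℕ} {g : ℝ → ℝ → ℝ → ℝ} (h : Creg δ (n+1) g)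
    {p : ℝ × ℝ × ℝ} (hp : p.2.2 ∈ Set.Ioo (-δ) δ) :
    unc (Dθ g) =ᶠ[nhds p] fun q => fderiv ℝ (unc g) q (0, 0, 1) :=
  (tube_nhds hp).mono fun q hq => (h.ht q.1 q.2.1 hq).deriv

lemma Creg.Dr {δ : ℝ} {n : ℕ} {g : ℝ → ℝ → ℝ → ℝ} (h : Creg δ (n+1) g) : Creg δ n (Dr g) :=
  fun _ hp => (h.fd _ hp).congr_of_eventuallyEq (h.dr_ev hp)

lemma Creg.Dt {δ : ℝ} {n : ℕ} {g : ℝ → ℝ → ℝ → ℝ} (h : Creg δ (n+1) g) : Creg δ n (Dθ g) :=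
  fun _ hp => (h.fd _ hp).congr_of_eventuallyEq (h.dt_ev hp)

lemma Creg.swap {δ : ℝ} {g : ℝ → ℝ → ℝ → ℝ} (h : Creg δ 3 g)
    (z r : ℝ) {θ : ℝ} (hp : θ ∈ Set.Ioo (-δ) δ) :
    _root_.Dr (Dθ g) z r θ = Dθ (_root_.Dr g) z r θ := by
  have hp' : ((z, r, θ) : ℝ × ℝ × ℝ).2.2 ∈ Set.Ioo (-δ) δ := hp
  have e1 : _root_.Dr (Dθ g) z r θ = _ := (h.Dt.hr z r hp).deriv
  have e2 : Dθ (_root_.Dr g) z r θ = _ := (h.Dr.ht z r hp).deriv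
  have hs : IsSymmSndFDerivAt ℝ (unc g) (z, r, θ) :=
    (h _ hp').isSymmSndFDerivAt (by simp [minSmoothness_of_isRCLikeNormedField]; norm_cast)
  have hd : DifferentiableAt ℝ (fderiv ℝ (unc g)) (z, r, θ) :=
    ((h _ hp').fderiv_right (m := 2) (by norm_cast)).differentiableAt (by norm_num)
  rw [e1, e2, (h.dt_ev hp').fderiv_eq, (h.dr_ev hp').fderiv_eq]
  rw [fderiv_clm_apply hd (by fun_prop), fderiv_clm_apply hd (by fun_prop)]
  simpa using hs.eq _ _

lemma c_d1 {δ : ℝ} {φ : ℝ → EuclideanSpace ℝ (Fin 2)}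
    (hφ : ContDiffOn ℝ (⊤ : ℕ∞) φ (Set.Ioo (-δ) δ)) : ContDiffOn ℝ (⊤ : ℕ∞) (deriv φ) (Set.Ioo (-δ) δ) :=
  hφ.deriv_of_isOpen isOpen_Ioo (by simp)

lemma c_d2 {δ : ℝ} {φ : ℝ → EuclideanSpace ℝ (Fin 2)}
    (hφ : ContDiffOn ℝ (⊤ : ℕ∞) φ (Set.Ioo (-δ) δ)) : ContDiffOn ℝ (⊤ : ℕ∞) (deriv (deriv φ)) (Set.Ioo (-δ) δ) :=
  (c_d1 hφ).deriv_of_isOpen isOpen_Ioo (by simp)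

lemma c_k {δ : ℝ} {φ : ℝ → EuclideanSpace ℝ (Fin 2)}
    (hφ : ContDiffOn ℝ (⊤ : ℕ∞) φ (Set.Ioo (-δ) δ))
    (hcurv : ∀ θ ∈ Set.Ioo (-δ) δ, deriv (deriv φ) θ ≠ 0) : ContDiffOn ℝ (⊤ : ℕ∞) (curveKappa φ) (Set.Ioo (-δ) δ) :=
  (c_d2 hφ).norm ℝ hcurv

lemma c_N {δ : ℝ} {φ : ℝ → EuclideanSpace ℝ (Fin 2)}
    (hφ : ContDiffOn ℝ (⊤ : ℕ∞) φ (Set.Ioo (-δ) δ))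
    (hcurv : ∀ θ ∈ Set.Ioo (-δ) δ, deriv (deriv φ) θ ≠ 0) : ContDiffOn ℝ (⊤ : ℕ∞) (curveN φ) (Set.Ioo (-δ) δ) :=
  ((c_k hφ hcurv).inv (fun θ hθ => norm_ne_zero_iff.2 (hcurv θ hθ))).smul (c_d2 hφ)

lemma c_T {δ : ℝ} {φ : ℝ → EuclideanSpace ℝ (Fin 2)}
    (hφ : ContDiffOn ℝ (⊤ : ℕ∞) φ (Set.Ioo (-δ) δ))
    (hcurv : ∀ θ ∈ Set.Ioo (-δ) δ, deriv (deriv φ) θ ≠ 0) {p : ℝ × ℝ × ℝ} (hp : p.2.2 ∈ Set.Ioo (-δ) δ) :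
    ContDiffAt ℝ 3 (fun q : ℝ × ℝ × ℝ => Tmap φ q.1 q.2.1 q.2.2) p := by
  have hn := isOpen_Ioo.mem_nhds hp
  have hle : (3 : WithTop ℕ∞) ≤ ((⊤ : ℕ∞) : WithTop ℕ∞) := 
    WithTop.coe_le_coe.2 (le_top : (3 : ℕ∞) ≤ ⊤)
  have h1 : ContDiffAt ℝ 3 (fun q : ℝ × ℝ × ℝ => φ q.2.2) p :=
    ContDiffAt.comp p (g := φ) ((hφ.contDiffAt hn).of_le hle) (by fun_prop)
  have h2 : ContDiffAt ℝ 3 (fun q : ℝ × ℝ × ℝ => curveN φ q.2.2) p :=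
    ContDiffAt.comp p (g := curveN φ) (((c_N hφ hcurv).contDiffAt hn).of_le hle) (by fun_prop)
  have h3 : ContDiffAt ℝ 3
      (fun q : ℝ × ℝ × ℝ => emb23L (φ q.2.2 + q.2.1 • curveN φ q.2.2)) p :=
    emb23L.contDiff.contDiffAt.comp p
      (h1.add (ContDiffAt.smul (f := fun q : ℝ × ℝ × ℝ => q.2.1) (by fun_prop) h2))
  simp only [Tmap_eq]
  fun_prop

lemma c_vT {δ : ℝ} {φ : ℝ → EuclideanSpace ℝ (Fin 2)}
    (hφ : ContDiffOn ℝ (⊤ : ℕ∞) φ (Set.Ioo (-δ) δ))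
    (hcurv : ∀ θ ∈ Set.Ioo (-δ) δ, deriv (deriv φ) θ ≠ 0)
    {v : EuclideanSpace ℝ (Fin 3) → EuclideanSpace ℝ (Fin 3)}
    (hv : ContDiff ℝ 3 v) {p : ℝ × ℝ × ℝ} (hp : p.2.2 ∈ Set.Ioo (-δ) δ) :
    ContDiffAt ℝ 3 (fun q : ℝ × ℝ × ℝ => v (Tmap φ q.1 q.2.1 q.2.2)) p :=
  ContDiffAt.comp p (g := v) hv.contDiffAt (c_T hφ hcurv hp)

lemma c_vr {δ : ℝ} {φ : ℝ → EuclideanSpace ℝ (Fin 2)}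
    (hφ : ContDiffOn ℝ (⊤ : ℕ∞) φ (Set.Ioo (-δ) δ))
    (hcurv : ∀ θ ∈ Set.Ioo (-δ) δ, deriv (deriv φ) θ ≠ 0)
    {v : EuclideanSpace ℝ (Fin 3) → EuclideanSpace ℝ (Fin 3)}
    (hv : ContDiff ℝ 3 v) : Creg δ 3 (vrComp φ v) := by
  intro p hp
  have hle : (3 : WithTop ℕ∞) ≤ ((⊤ : ℕ∞) : WithTop ℕ∞) := 
    WithTop.coe_le_coe.2 (le_top : (3 : ℕ∞) ≤ ⊤)
  have h2 : ContDiffAt ℝ 3 (fun q : ℝ × ℝ × ℝ => curveN φ q.2.2) p :=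
    ContDiffAt.comp p (g := curveN φ)
      (((c_N hφ hcurv).contDiffAt (isOpen_Ioo.mem_nhds hp)).of_le hle) (by fun_prop)
  exact (c_vT hφ hcurv hv hp).inner ℝ (emb23L.contDiff.contDiffAt.comp p h2)

lemma c_vt {δ : ℝ} {φ : ℝ → EuclideanSpace ℝ (Fin 2)}
    (hφ : ContDiffOn ℝ (⊤ : ℕ∞) φ (Set.Ioo (-δ) δ))
    (hcurv : ∀ θ ∈ Set.Ioo (-δ) δ, deriv (deriv φ) θ ≠ 0)
    {v : EuclideanSpace ℝ (Fin 3) → EuclideanSpace ℝ (Fin 3)}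
    (hv : ContDiff ℝ 3 v) : Creg δ 3 (vθComp φ v) := by
  intro p hp
  have hle : (3 : WithTop ℕ∞) ≤ ((⊤ : ℕ∞) : WithTop ℕ∞) := 
    WithTop.coe_le_coe.2 (le_top : (3 : ℕ∞) ≤ ⊤)
  have h2 : ContDiffAt ℝ 3 (fun q : ℝ × ℝ × ℝ => deriv φ q.2.2) p :=
    ContDiffAt.comp p (g := deriv φ)
      (((c_d1 hφ).contDiffAt (isOpen_Ioo.mem_nhds hp)).of_le hle) (by fun_prop)
  exact (c_vT hφ hcurv hv hp).inner ℝ (emb23L.contDiff.contDiffAt.comp p h2)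

lemma orth {δ : ℝ} {φ : ℝ → EuclideanSpace ℝ (Fin 2)}
    (hφ : ContDiffOn ℝ (⊤ : ℕ∞) φ (Set.Ioo (-δ) δ))
    (hunit : ∀ θ ∈ Set.Ioo (-δ) δ, ‖deriv φ θ‖ = 1) {θ : ℝ} (hθ : θ ∈ Set.Ioo (-δ) δ) :
    inner ℝ (deriv φ θ) (deriv (deriv φ) θ) = (0:ℝ) := by
  have hn := isOpen_Ioo.mem_nhds hθ
  have h1 : HasDerivAt (deriv φ) (deriv (deriv φ) θ) θ :=
    (((c_d1 hφ).contDiffAt hn).differentiableAt (by simp)).hasDerivAt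
  have h2 := h1.inner ℝ h1
  have h3 : (fun t => inner ℝ (deriv φ t) (deriv φ t)) =ᶠ[nhds θ] fun _ => (1:ℝ) := by
    filter_upwards [hn] with t ht
    rw [real_inner_self_eq_norm_sq, hunit t ht]; norm_num
  have h4 := h3.deriv_eq
  rw [h2.deriv, deriv_const, real_inner_comm] at h4
  rw [real_inner_comm] at h4 ⊢
  linarith [real_inner_comm (deriv φ θ) (deriv (deriv φ) θ)]

lemma trace_alg (a b n m p q r s : ℝ) (h1 : a*a+b*b=1) (h2 : n*n+m*m=1) (h3 : a*n+b*m=0) :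
    (a*p+b*q)*a + (a*r+b*s)*b + ((n*p+m*q)*n + (n*r+m*s)*m) = p + s := by
  have e1 : n*n = b*b := by linear_combination (-n*n)*h1 + (a*n-b*m)*h3 + b*b*h2
  have e2 : m*m = a*a := by linarith
  have e3 : a*b + n*m = 0 := by
    linear_combination (-n*m)*h1 + (a*m+b*n)*h3 - a*b*h2 
  linear_combination p*(h1+e1) + s*(h1+e2) + (q+r)*e3

lemma E1 {δ : ℝ} {φ : ℝ → EuclideanSpace ℝ (Fin 2)}
    (hφ : ContDiffOn ℝ (⊤ : ℕ∞) φ (Set.Ioo (-δ) δ))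
    (hunit : ∀ θ ∈ Set.Ioo (-δ) δ, ‖deriv φ θ‖ = 1)
    (hcurv : ∀ θ ∈ Set.Ioo (-δ) δ, deriv (deriv φ) θ ≠ 0)
    {v : EuclideanSpace ℝ (Fin 3) → EuclideanSpace ℝ (Fin 3)}
    (hv : ContDiff ℝ 3 v) (hdiv : ∀ x : EuclideanSpace ℝ (Fin 3), div3 v x = 0)
    (z : ℝ) {θ : ℝ} (hθ : θ ∈ Set.Ioo (-δ) δ) :
    Dz (vzComp φ v) z 0 θ = -(Dr (vrComp φ v) z 0 θ) - Dθ (vθComp φ v) z 0 θ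
      + curveKappa φ θ * vrComp φ v z 0 θ := by
  have hn := isOpen_Ioo.mem_nhds hθ
  have hk : ‖deriv (deriv φ) θ‖ ≠ 0 := norm_ne_zero_iff.2 (hcurv θ hθ)
  have hL : HasFDerivAt v (fderiv ℝ v (Tmap φ z 0 θ)) (Tmap φ z 0 θ) :=
    (hv.differentiable (by norm_num) _).hasFDerivAt
  set L := fderiv ℝ v (Tmap φ z 0 θ) with hLdef
  have hp1 : HasDerivAt φ (deriv φ θ) θ :=
    ((hφ.contDiffAt hn).differentiableAt (by simp)).hasDerivAt
  have hp2 : HasDerivAt (deriv φ) (deriv (deriv φ) θ) θ :=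
    (((c_d1 hφ).contDiffAt hn).differentiableAt (by simp)).hasDerivAt
  have hTz : HasDerivAt (fun s => Tmap φ s 0 θ) (EuclideanSpace.single 2 (1:ℝ)) z := by
    simp only [Tmap_eq]
    simpa using ((hasDerivAt_id z).smul_const
      (EuclideanSpace.single 2 (1:ℝ) : EuclideanSpace ℝ (Fin 3))).const_add
        (emb23L (φ θ + (0:ℝ) • curveN φ θ))
  have hTr : HasDerivAt (fun s => Tmap φ z s θ) (emb23L (curveN φ θ)) 0 := by
    simp only [Tmap_eq]
    have := (((hasDerivAt_id (0:ℝ)).smul_const (curveN φ θ)).const_add (φ θ))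
    simpa using (emb23L.hasFDerivAt.comp_hasDerivAt (0:ℝ) this).add_const
      (z • (EuclideanSpace.single 2 (1:ℝ) : EuclideanSpace ℝ (Fin 3)))
  have hTt : HasDerivAt (fun s => Tmap φ z 0 s) (emb23L (deriv φ θ)) θ := by
    simp only [Tmap_eq, zero_smul, add_zero]
    exact (emb23L.hasFDerivAt.comp_hasDerivAt θ hp1).add_const _
  have d1 : Dz (vzComp φ v) z 0 θ
      = inner ℝ (L (EuclideanSpace.single 2 (1:ℝ))) (EuclideanSpace.single 2 (1:ℝ)) := by
    have := (hL.comp_hasDerivAt z hTz).inner ℝ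
      (hasDerivAt_const z (EuclideanSpace.single 2 (1:ℝ) : EuclideanSpace ℝ (Fin 3)))
    have h6 : Dz (vzComp φ v) z 0 θ = _ := this.deriv
    rw [h6]; simp
  have d2 : Dr (vrComp φ v) z 0 θ
      = inner ℝ (L (emb23L (curveN φ θ))) (emb23L (curveN φ θ)) := by
    have := (hL.comp_hasDerivAt (0:ℝ) hTr).inner ℝ
      (hasDerivAt_const (0:ℝ) (emb23L (curveN φ θ)))
    have h6 : Dr (vrComp φ v) z 0 θ = _ := this.deriv
    rw [h6]; simp
  have d3 : Dθ (vθComp φ v) z 0 θ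
      = inner ℝ (v (Tmap φ z 0 θ)) (emb23L (deriv (deriv φ) θ))
        + inner ℝ (L (emb23L (deriv φ θ))) (emb23L (deriv φ θ)) := by
    have := (hL.comp_hasDerivAt θ hTt).inner ℝ
      (emb23L.hasFDerivAt.comp_hasDerivAt θ hp2)
    exact this.deriv
  have hkN : deriv (deriv φ) θ = curveKappa φ θ • curveN φ θ := by
    simp [curveKappa, curveN, smul_smul, hk]
  have d4 : inner ℝ (v (Tmap φ z 0 θ)) (emb23L (deriv (deriv φ) θ))
      = curveKappa φ θ * vrComp φ v z 0 θ := by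
    rw [hkN, map_smul, inner_smul_right]; rfl
  have hNn : ‖curveN φ θ‖ = 1 := by
    simp [curveN, norm_smul, hk]
  have ho : inner ℝ (deriv φ θ) (curveN φ θ) = (0:ℝ) := by
    rw [curveN, inner_smul_right, orth hφ hunit hθ, mul_zero]
  have h0 : ∀ i : Fin 3, pdE i (fun y => v y i) (Tmap φ z 0 θ)
      = L (EuclideanSpace.single i 1) i := by
    intro i
    have := ((EuclideanSpace.proj i : EuclideanSpace ℝ (Fin 3) →L[ℝ] ℝ).hasFDerivAt).comp _ hL
    have h5 : fderiv ℝ (fun y => v y i) (Tmap φ z 0 θ) = _ := this.fderiv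
    rw [pdE, h5]; rfl
  have hd := hdiv (Tmap φ z 0 θ)
  rw [div3, Fin.sum_univ_three, h0, h0, h0] at hd
  have hemb : ∀ x : EuclideanSpace ℝ (Fin 2), emb23L x
      = x 0 • EuclideanSpace.single 0 (1:ℝ) + x 1 • EuclideanSpace.single 1 (1:ℝ) := by
    intro x; rw [emb23L_apply]; ext i; fin_cases i <;> simp [emb23]
  have hin : ∀ x : EuclideanSpace ℝ (Fin 2), inner ℝ (L (emb23L x)) (emb23L x)
      = (x 0 * L (EuclideanSpace.single 0 1) 0 + x 1 * L (EuclideanSpace.single 1 1) 0) * x 0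
      + (x 0 * L (EuclideanSpace.single 0 1) 1 + x 1 * L (EuclideanSpace.single 1 1) 1) * x 1 := by
    intro x
    rw [hemb, map_add, map_smul, map_smul]
    simp [PiLp.inner_apply, Fin.sum_univ_three]
    ring
  have hu := hunit θ hθ
  have a1 : deriv φ θ 0 * deriv φ θ 0 + deriv φ θ 1 * deriv φ θ 1 = 1 := by
    have := real_inner_self_eq_norm_sq (deriv φ θ)
    rw [hu, PiLp.inner_apply, Fin.sum_univ_two] at this
    simp only [RCLike.inner_apply, conj_trivial] at this
    linarith
  have a2 : curveN φ θ 0 * curveN φ θ 0 + curveN φ θ 1 * curveN φ θ 1 = 1 := by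
    have := real_inner_self_eq_norm_sq (curveN φ θ)
    rw [hNn, PiLp.inner_apply, Fin.sum_univ_two] at this
    simp only [RCLike.inner_apply, conj_trivial] at this
    linarith
  have a3 : deriv φ θ 0 * curveN φ θ 0 + deriv φ θ 1 * curveN φ θ 1 = 0 := by
    have := ho
    simp [PiLp.inner_apply] at this
    linarith
  have key := trace_alg _ _ _ _ (L (EuclideanSpace.single 0 1) 0) (L (EuclideanSpace.single 1 1) 0)
    (L (EuclideanSpace.single 0 1) 1) (L (EuclideanSpace.single 1 1) 1) a1 a2 a3
  have d5 : inner ℝ (L (EuclideanSpace.single 2 (1:ℝ))) (EuclideanSpace.single 2 (1:ℝ))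
      = L (EuclideanSpace.single 2 1) 2 := by
    simp [PiLp.inner_apply]
  rw [d1, d2, d3, d4, d5, hin, hin]
  linarith

/-- For a `C³` divergence-free vector field `v : ℝ³ → ℝ³`, at every
point of the form `(z, 0, θ̄)` the frame components satisfy
`∂_z∂_θ̄(∂_z v_z) = −∂_z∂_r̄∂_θ̄ v_r̄ + κ'·∂_z v_r̄ + κ·∂_z∂_θ̄ v_r̄ − ∂_z∂_θ̄² v_θ̄`. -/
theorem stmt9 (δ : ℝ) (hδ : 0 < δ) (φ : ℝ → EuclideanSpace ℝ (Fin 2))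
    (hφ : ContDiffOn ℝ (⊤ : ℕ∞) φ (Set.Ioo (-δ) δ))
    (hunit : ∀ θ ∈ Set.Ioo (-δ) δ, ‖deriv φ θ‖ = 1)
    (hcurv : ∀ θ ∈ Set.Ioo (-δ) δ, deriv (deriv φ) θ ≠ 0)
    (v : EuclideanSpace ℝ (Fin 3) → EuclideanSpace ℝ (Fin 3))
    (hv : ContDiff ℝ 3 v)
    (hdiv : ∀ x : EuclideanSpace ℝ (Fin 3), div3 v x = 0) :
    ∀ z : ℝ, ∀ θ ∈ Set.Ioo (-δ) δ,
      Dz (Dθ (Dz (vzComp φ v))) z 0 θ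
        = -(Dz (Dr (Dθ (vrComp φ v))) z 0 θ)
          + deriv (curveKappa φ) θ * Dz (vrComp φ v) z 0 θ
          + curveKappa φ θ * Dz (Dθ (vrComp φ v)) z 0 θ
          - Dz (Dθ (Dθ (vθComp φ v))) z 0 θ := by
  have hr := c_vr hφ hcurv hv
  have ht := c_vt hφ hcurv hv
  intro z θ hθ
  have hn := isOpen_Ioo.mem_nhds hθ
  have hk : HasDerivAt (curveKappa φ) (deriv (curveKappa φ) θ) θ :=
    (((c_k hφ hcurv).contDiffAt hn).differentiableAt (by simp)).hasDerivAt
  have step : ∀ s : ℝ, Dθ (Dz (vzComp φ v)) s 0 θ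
      = -(Dr (Dθ (vrComp φ v)) s 0 θ) - Dθ (Dθ (vθComp φ v)) s 0 θ
        + (deriv (curveKappa φ) θ * vrComp φ v s 0 θ
          + curveKappa φ θ * Dθ (vrComp φ v) s 0 θ) := by
    intro s
    have he : (fun t => Dz (vzComp φ v) s 0 t) =ᶠ[nhds θ] fun t =>
        -(Dr (vrComp φ v) s 0 t) - Dθ (vθComp φ v) s 0 t
          + curveKappa φ t * vrComp φ v s 0 t := by
      filter_upwards [hn] with t ht
      exact E1 hφ hunit hcurv hv hdiv s ht
    have b1 := (hr.Dr.ht s 0 hθ).differentiableAt.hasDerivAt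
    have b2 := (ht.Dt.ht s 0 hθ).differentiableAt.hasDerivAt
    have b3 := (hr.ht s 0 hθ).differentiableAt.hasDerivAt
    rw [hr.swap s 0 hθ]
    exact he.deriv_eq.trans ((b1.neg.sub b2).add (hk.mul b3)).deriv
  have c1 := (hr.Dt.Dr.hz z 0 hθ).differentiableAt.hasDerivAt
  have c2 := (ht.Dt.Dt.hz z 0 hθ).differentiableAt.hasDerivAt
  have c3 := (hr.hz z 0 hθ).differentiableAt.hasDerivAt
  have c4 := (hr.Dt.hz z 0 hθ).differentiableAt.hasDerivAt
  have fin := ((c1.neg.sub c2).add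
    ((c3.const_mul (deriv (curveKappa φ) θ)).add (c4.const_mul (curveKappa φ θ)))).deriv
  have e : Dz (Dθ (Dz (vzComp φ v))) z 0 θ = _ :=
    (congrArg (fun F => deriv F z) (funext step)).trans fin
  rw [e]
  simp only [Dz]
  ring
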